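/- Square-case bound: let n ≥ 2, let A ∈ ℝ^{n×n} be nonsingular, and let P, Q ∈ ℝ^{n×n} be orthogonal with A = P B̄ Qᵀ, where B̄ ∈ ℝ^{n×n} is lower bidiagonal with diagonal entries α_i > 0 (1 ≤ i ≤ n) and subdiagonal entries β_{i+1} > 0 (1 ≤ i ≤ n−1), all other entries zero. Let σ_1 > σ_2 > ⋯ > σ_n > 0 be the singular values of A. Then for every k with 1 ≤ k ≤ n−1, the smallest singular value θ̄_k^{(k)} of the leading k×k principal submatrix B̄_k of B̄ and the smallest singular value θ_k^{(k)} of the leading (k+1)×k submatrix B_k of B̄ satisfy σ_n < θ̄_k^{(k)} < θ_k^{(k)} < σ_k. -/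

import Mathlib

open Matrix

/-- Spectral norm (largest singular value) of a real matrix. -/
noncomputable def specNorm {a b : ℕ} (M : Matrix (Fin a) (Fin b) ℝ) : ℝ :=
  ‖LinearMap.toContinuousLinearMap (Matrix.toEuclideanLin M)‖

/-- The `j`-th largest singular value of a real matrix (`j ≥ 1`), characterized via the
Eckart–Young theorem as the minimal spectral-norm distance to matrices of rank `< j`;
it is `0` when `j` exceeds the smaller dimension. -/
noncomputable def singVal {a b : ℕ} (M : Matrix (Fin a) (Fin b) ℝ) (j : ℕ) : ℝ :=
  sInf {r : ℝ | ∃ D : Matrix (Fin a) (Fin b) ℝ, D.rank < j ∧ r = specNorm (M - D)}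

/-- The matrix of the first `k` columns of `M`. -/
def colSub {a b : ℕ} (M : Matrix (Fin a) (Fin b) ℝ) (k : ℕ) (hk : k ≤ b) :
    Matrix (Fin a) (Fin k) ℝ :=
  M.submatrix id fun j => ⟨j.1, lt_of_lt_of_le j.2 hk⟩

/-- The leading `r × c` submatrix of `M`. -/
def subUL {a b : ℕ} (M : Matrix (Fin a) (Fin b) ℝ) (r c : ℕ) (hr : r ≤ a) (hc : c ≤ b) :
    Matrix (Fin r) (Fin c) ℝ :=
  M.submatrix (fun i => ⟨i.1, lt_of_lt_of_le i.2 hr⟩) (fun j => ⟨j.1, lt_of_lt_of_le j.2 hc⟩)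


lemma eucl_norm_sq {b : ℕ} (x : Fin b → ℝ) : ‖WithLp.toLp 2 x‖ ^ 2 = x ⬝ᵥ x := by
  rw [EuclideanSpace.norm_sq_eq]
  simp [dotProduct, sq]

lemma dp_nonneg {b : ℕ} (x : Fin b → ℝ) : 0 ≤ x ⬝ᵥ x := by
  rw [← eucl_norm_sq]; positivity

lemma dp_pos {b : ℕ} {x : Fin b → ℝ} (hx : x ≠ 0) : 0 < x ⬝ᵥ x := by
  refine lt_of_le_of_ne (dp_nonneg x) fun h => hx (dotProduct_self_eq_zero.mp h.symm)

lemma specNorm_nonneg {a b : ℕ} (M : Matrix (Fin a) (Fin b) ℝ) : 0 ≤ specNorm M := norm_nonneg _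

lemma specNorm_bound {a b : ℕ} (M : Matrix (Fin a) (Fin b) ℝ) (x : Fin b → ℝ) :
    (M *ᵥ x) ⬝ᵥ (M *ᵥ x) ≤ specNorm M ^ 2 * (x ⬝ᵥ x) := by
  have h := (LinearMap.toContinuousLinearMap (Matrix.toEuclideanLin M)).le_opNorm (WithLp.toLp 2 x)
  have h2 : ‖WithLp.toLp 2 (M *ᵥ x)‖ ≤ specNorm M * ‖WithLp.toLp 2 x‖ := h
  rw [← eucl_norm_sq, ← eucl_norm_sq, ← mul_pow]
  exact pow_le_pow_left₀ (norm_nonneg _) h2 2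

lemma specNorm_le {a b : ℕ} (M : Matrix (Fin a) (Fin b) ℝ) (c : ℝ) (hc : 0 ≤ c)
    (h : ∀ x : Fin b → ℝ, (M *ᵥ x) ⬝ᵥ (M *ᵥ x) ≤ c ^ 2 * (x ⬝ᵥ x)) : specNorm M ≤ c := by
  refine ContinuousLinearMap.opNorm_le_bound _ hc fun y => ?_
  have h1 := h (WithLp.ofLp y)
  rw [← eucl_norm_sq, ← eucl_norm_sq, ← mul_pow] at h1
  exact (le_abs_self _).trans (abs_le_of_sq_le_sq h1 (by positivity))

lemma specNorm_transpose {a b : ℕ} (M : Matrix (Fin a) (Fin b) ℝ) : specNorm Mᵀ = specNorm M := by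
  open scoped Matrix.Norms.L2Operator in
  have h := Matrix.l2_opNorm_conjTranspose M
  rw [Matrix.l2_opNorm_def, Matrix.l2_opNorm_def, conjTranspose_eq_transpose_of_trivial] at h
  exact h

lemma singVal_transpose {a b : ℕ} (M : Matrix (Fin a) (Fin b) ℝ) (j : ℕ) :
    singVal Mᵀ j = singVal M j := by
  unfold singVal
  congr 1
  ext r
  constructor
  · rintro ⟨D, hD, rfl⟩
    refine ⟨Dᵀ, by rwa [rank_transpose], ?_⟩
    rw [← specNorm_transpose, transpose_sub, transpose_transpose]
  · rintro ⟨D, hD, rfl⟩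
    refine ⟨Dᵀ, by rwa [rank_transpose], ?_⟩
    rw [← specNorm_transpose, transpose_sub]

lemma singVal_bdd {a b : ℕ} (M : Matrix (Fin a) (Fin b) ℝ) (j : ℕ) :
    BddBelow {r : ℝ | ∃ D : Matrix (Fin a) (Fin b) ℝ, D.rank < j ∧ r = specNorm (M - D)} :=
  ⟨0, by rintro _ ⟨D, -, rfl⟩; exact specNorm_nonneg _⟩

lemma singVal_nonneg {a b : ℕ} (M : Matrix (Fin a) (Fin b) ℝ) (j : ℕ) : 0 ≤ singVal M j :=
  Real.sInf_nonneg (by rintro _ ⟨D, -, rfl⟩; exact specNorm_nonneg _)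

lemma rank_lt_of_ker {a b : ℕ} (D : Matrix (Fin a) (Fin b) ℝ) (x : Fin b → ℝ) (hx : x ≠ 0)
    (h : D *ᵥ x = 0) : D.rank < b := by
  have h1 := LinearMap.finrank_range_add_finrank_ker D.mulVecLin
  have h2 : 0 < Module.finrank ℝ (LinearMap.ker D.mulVecLin) := by
    rw [Module.finrank_pos_iff_exists_ne_zero]
    exact ⟨⟨x, by simpa using h⟩, by simpa [Subtype.ext_iff] using hx⟩
  simp only [Module.finrank_fin_fun] at h1
  unfold Matrix.rank
  omega

lemma ker_of_rank_lt {a b : ℕ} (D : Matrix (Fin a) (Fin b) ℝ) (h : D.rank < b) :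
    ∃ x : Fin b → ℝ, x ≠ 0 ∧ D *ᵥ x = 0 := by
  have h1 := LinearMap.finrank_range_add_finrank_ker D.mulVecLin
  simp only [Module.finrank_fin_fun] at h1
  unfold Matrix.rank at h
  have h2 : 0 < Module.finrank ℝ (LinearMap.ker D.mulVecLin) := by omega
  rw [Module.finrank_pos_iff_exists_ne_zero] at h2
  obtain ⟨⟨x, hx⟩, hx0⟩ := h2
  exact ⟨x, by simpa [Subtype.ext_iff] using hx0, by simpa using hx⟩

lemma le_singVal {a b j : ℕ} (hj : 1 ≤ j) (M : Matrix (Fin a) (Fin b) ℝ)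
    (E : Matrix (Fin b) (Fin j) ℝ) (hE : ∀ x, x ≠ 0 → E *ᵥ x ≠ 0) (ρ : ℝ)
    (h : ∀ x, ρ ^ 2 * ((E *ᵥ x) ⬝ᵥ (E *ᵥ x)) ≤ (M *ᵥ (E *ᵥ x)) ⬝ᵥ (M *ᵥ (E *ᵥ x))) :
    ρ ≤ singVal M j := by
  refine le_csInf ⟨_, 0, by rw [rank_zero]; omega, rfl⟩ ?_
  rintro _ ⟨D, hD, rfl⟩
  obtain ⟨x, hx, hx2⟩ := ker_of_rank_lt (D * E) (lt_of_le_of_lt (rank_mul_le_left D E) hD)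
  rw [← mulVec_mulVec] at hx2
  have h1 := specNorm_bound (M - D) (E *ᵥ x)
  rw [sub_mulVec, hx2, sub_zero] at h1
  have h2 := dp_pos (hE x hx)
  have h3 := le_of_mul_le_mul_right ((h x).trans h1) h2
  have := abs_le_of_sq_le_sq h3 (specNorm_nonneg _)
  exact (le_abs_self _).trans this

lemma singVal_le {a b : ℕ} (M : Matrix (Fin a) (Fin b) ℝ) (x : Fin b → ℝ) :
    singVal M b ^ 2 * (x ⬝ᵥ x) ≤ (M *ᵥ x) ⬝ᵥ (M *ᵥ x) := by
  by_cases hx : x = 0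
  · simp [hx]
  have hp := dp_pos hx
  set m := (M *ᵥ x) ⬝ᵥ (M *ᵥ x) with hm
  have hm0 : 0 ≤ m := dp_nonneg _
  have key : singVal M b ≤ √(m / (x ⬝ᵥ x)) := by
    let R : Matrix (Fin a) (Fin b) ℝ := (x ⬝ᵥ x)⁻¹ • vecMulVec (M *ᵥ x) x
    have hR : ∀ y, R *ᵥ y = ((x ⬝ᵥ x)⁻¹ * (x ⬝ᵥ y)) • (M *ᵥ x) := by
      intro y
      simp only [R, smul_mulVec, vecMulVec_mulVec, mul_smul]
      simp
    refine (csInf_le (singVal_bdd M b) ⟨M - R, ?_, rfl⟩).trans ?_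
    · refine rank_lt_of_ker _ x hx ?_
      rw [sub_mulVec, hR, inv_mul_cancel₀ hp.ne', one_smul, sub_self]
    · refine specNorm_le _ _ (Real.sqrt_nonneg _) fun y => ?_
      rw [sub_sub_cancel, hR, Real.sq_sqrt (by positivity), smul_dotProduct, dotProduct_smul, ← hm]
      simp only [smul_eq_mul]
      have cs : (x ⬝ᵥ y) ^ 2 ≤ (x ⬝ᵥ x) * (y ⬝ᵥ y) := by
        have := Finset.sum_mul_sq_le_sq_mul_sq Finset.univ x y
        simpa [dotProduct, sq] using this
      have : (x ⬝ᵥ x)⁻¹ * (x ⬝ᵥ y) * ((x ⬝ᵥ x)⁻¹ * (x ⬝ᵥ y) * m)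
          = ((x ⬝ᵥ x)⁻¹ ^ 2 * m) * (x ⬝ᵥ y) ^ 2 := by ring
      rw [this]
      calc _ ≤ ((x ⬝ᵥ x)⁻¹ ^ 2 * m) * ((x ⬝ᵥ x) * (y ⬝ᵥ y)) := by gcongr
        _ = _ := by field_simp
  have := pow_le_pow_left₀ (singVal_nonneg M b) key 2
  rw [Real.sq_sqrt (by positivity)] at this
  rwa [le_div_iff₀ hp] at this

lemma exists_min_ratio {p q j : ℕ} (hj : 1 ≤ j) (U : Matrix (Fin p) (Fin j) ℝ)
    (W : Matrix (Fin q) (Fin j) ℝ) (hW : ∀ x, x ≠ 0 → W *ᵥ x ≠ 0) :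
    ∃ x0 : Fin j → ℝ, x0 ≠ 0 ∧ ∀ x : Fin j → ℝ,
      ((U *ᵥ x0) ⬝ᵥ (U *ᵥ x0)) / ((W *ᵥ x0) ⬝ᵥ (W *ᵥ x0)) * ((W *ᵥ x) ⬝ᵥ (W *ᵥ x))
        ≤ (U *ᵥ x) ⬝ᵥ (U *ᵥ x) := by
  have : NeZero j := ⟨by omega⟩
  have hne : (Metric.sphere (0 : Fin j → ℝ) 1).Nonempty := NormedSpace.sphere_nonempty.mpr zero_le_one
  have h0 : ∀ x ∈ Metric.sphere (0 : Fin j → ℝ) 1, x ≠ 0 := by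
    rintro x hx rfl; simp at hx
  obtain ⟨x0, hx0, hmin⟩ := (isCompact_sphere (0 : Fin j → ℝ) 1).exists_isMinOn hne
    (f := fun x => ((U *ᵥ x) ⬝ᵥ (U *ᵥ x)) / ((W *ᵥ x) ⬝ᵥ (W *ᵥ x)))
    (by
      refine ContinuousOn.div ?_ ?_ fun x hx => (dp_pos (hW x (h0 x hx))).ne'
      · exact (Continuous.dotProduct (by fun_prop) (by fun_prop)).continuousOn
      · exact (Continuous.dotProduct (by fun_prop) (by fun_prop)).continuousOn)
  refine ⟨x0, h0 x0 hx0, fun x => ?_⟩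
  by_cases hx : x = 0
  · simp [hx]
  have hn : ‖x‖ ≠ 0 := norm_ne_zero_iff.mpr hx
  have h1 := hmin (a := ‖x‖⁻¹ • x) (by simp [norm_smul, hn])
  simp only [Set.mem_ofPred_eq, mulVec_smul, smul_dotProduct, dotProduct_smul, smul_eq_mul] at h1
  have h2 := dp_pos (hW x hx)
  rw [← le_div_iff₀ h2]
  refine h1.trans_eq ?_
  field_simp

lemma singVal_attained {a b : ℕ} (hb : 1 ≤ b) (M : Matrix (Fin a) (Fin b) ℝ) :
    ∃ x : Fin b → ℝ, x ≠ 0 ∧ (M *ᵥ x) ⬝ᵥ (M *ᵥ x) = singVal M b ^ 2 * (x ⬝ᵥ x) := by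
  obtain ⟨x, hx, h⟩ := exists_min_ratio hb M (1 : Matrix (Fin b) (Fin b) ℝ) (by simp)
  refine ⟨x, hx, le_antisymm ?_ (singVal_le M x)⟩
  have hp := dp_pos hx
  have h0 : 0 ≤ (M *ᵥ x) ⬝ᵥ (M *ᵥ x) / (x ⬝ᵥ x) := div_nonneg (dp_nonneg _) hp.le
  simp only [one_mulVec] at h
  have := le_singVal hb M 1 (by simp) (√((M *ᵥ x) ⬝ᵥ (M *ᵥ x) / (x ⬝ᵥ x))) (by
    intro y
    rw [Real.sq_sqrt h0]
    simpa using h y)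
  have := pow_le_pow_left₀ (Real.sqrt_nonneg _) this 2
  rwa [Real.sq_sqrt h0, div_le_iff₀ hp] at this

lemma lt_singVal {a b j : ℕ} (hj : 1 ≤ j) (M : Matrix (Fin a) (Fin b) ℝ)
    (E : Matrix (Fin b) (Fin j) ℝ) (hE : ∀ x, x ≠ 0 → E *ᵥ x ≠ 0) (θ : ℝ)
    (h : ∀ x, x ≠ 0 →
      θ ^ 2 * ((E *ᵥ x) ⬝ᵥ (E *ᵥ x)) < (M *ᵥ (E *ᵥ x)) ⬝ᵥ (M *ᵥ (E *ᵥ x))) :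
    θ < singVal M j := by
  obtain ⟨x, hx, h1⟩ := exists_min_ratio hj (M * E) E hE
  simp only [← mulVec_mulVec] at h1
  have hp := dp_pos (hE x hx)
  have h2 := h x hx
  rw [← lt_div_iff₀ hp] at h2
  have h0 := (sq_nonneg θ).trans h2.le
  refine (Real.lt_sqrt_of_sq_lt h2).trans_le (le_singVal hj M E hE _ ?_)
  intro y
  rw [Real.sq_sqrt h0]
  exact h1 y

lemma min_eigen {a b : ℕ} (M : Matrix (Fin a) (Fin b) ℝ) (l : ℝ)
    (h : ∀ x, l * (x ⬝ᵥ x) ≤ (M *ᵥ x) ⬝ᵥ (M *ᵥ x)) (v : Fin b → ℝ)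
    (hv : (M *ᵥ v) ⬝ᵥ (M *ᵥ v) = l * (v ⬝ᵥ v)) : (Mᵀ * M) *ᵥ v = l • v := by
  have e : ∀ x, x ⬝ᵥ ((Mᵀ * M - l • 1) *ᵥ x) = (M *ᵥ x) ⬝ᵥ (M *ᵥ x) - l * (x ⬝ᵥ x) := by
    intro x
    rw [sub_mulVec, dotProduct_sub, smul_mulVec, one_mulVec, dotProduct_smul, smul_eq_mul,
      ← mulVec_mulVec, dotProduct_mulVec, vecMul_transpose]
  have hS : (Mᵀ * M - l • (1 : Matrix (Fin b) (Fin b) ℝ)).PosSemidef := by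
    refine .of_dotProduct_mulVec_nonneg ?_ fun x => ?_
    · unfold IsHermitian
      simp [conjTranspose_eq_transpose_of_trivial]
    · rw [star_trivial, e]; linarith [h x]
  have := (hS.dotProduct_mulVec_zero_iff v).mp (by rw [star_trivial, e, hv, sub_self])
  rw [sub_mulVec, smul_mulVec, one_mulVec] at this
  exact sub_eq_zero.mp this

lemma tridiag_zero {c : ℕ} (T : Matrix (Fin c) (Fin c) ℝ) (l : ℝ) (v : Fin c → ℝ)
    (h0 : ∀ i j : Fin c, (j : ℕ) + 1 < i → T i j = 0)
    (h1 : ∀ i j : Fin c, (j : ℕ) + 1 = i → T i j ≠ 0)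
    (hv : T *ᵥ v = l • v) (hlast : ∀ i : Fin c, (i : ℕ) + 1 = c → v i = 0) : v = 0 := by
  have key : ∀ m : ℕ, ∀ i : Fin c, c ≤ (i : ℕ) + 1 + m → v i = 0 := by
    intro m
    induction m with
    | zero => intro i hi; exact hlast i (by omega)
    | succ m ih =>
      intro i hi
      by_cases hc : (i : ℕ) + 1 = c
      · exact hlast i hc
      let i' : Fin c := ⟨i + 1, by omega⟩
      have e := congrFun hv i'
      have hz : v i' = 0 := ih i' (by simp only [i']; omega)
      rw [Pi.smul_apply, hz, smul_zero, mulVec, dotProduct, Finset.sum_eq_single i] at e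
      · exact (mul_eq_zero.mp e).resolve_left (h1 i' i rfl)
      · intro b _ hb
        rcases lt_or_gt_of_ne (fun h => hb (Fin.ext h) : (b : ℕ) ≠ i) with hlt | hgt
        · rw [h0 i' b (by simp only [i']; omega), zero_mul]
        · rw [ih b (by omega), mul_zero]
      · simp
  funext i
  exact key c i (by omega)

def extZ {c : ℕ} (x : Fin c → ℝ) (j : ℕ) : ℝ := if h : j < c then x ⟨j, h⟩ else 0

lemma extZ_fin {c : ℕ} (x : Fin c → ℝ) : (fun j : Fin c => extZ x j) = x := by
  funext j; simp [extZ]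

lemma extZ_ge {c : ℕ} (x : Fin c → ℝ) (j : ℕ) (h : c ≤ j) : extZ x j = 0 := by
  simp [extZ, Nat.not_lt.mpr h]

def IsBid {r c : ℕ} (M : Matrix (Fin r) (Fin c) ℝ) (a b : ℕ → ℝ) : Prop :=
  ∀ i j, M i j = if (i : ℕ) = j then a j else if (i : ℕ) = (j : ℕ) + 1 then b j else 0

def bidRow (a b ξ : ℕ → ℝ) (i : ℕ) : ℝ := a i * ξ i + if i = 0 then 0 else b (i - 1) * ξ (i - 1)

lemma dp_range {c : ℕ} (ξ : ℕ → ℝ) :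
    (fun j : Fin c => ξ j) ⬝ᵥ (fun j : Fin c => ξ j) = ∑ i ∈ Finset.range c, ξ i ^ 2 := by
  simp only [dotProduct, ← sq]
  exact Fin.sum_univ_eq_sum_range (fun i => ξ i ^ 2) c

lemma bid_mulVec {r c : ℕ} {M : Matrix (Fin r) (Fin c) ℝ} {a b : ℕ → ℝ} (hM : IsBid M a b)
    (ξ : ℕ → ℝ) (hξ : ∀ j, c ≤ j → ξ j = 0) :
    M *ᵥ (fun j : Fin c => ξ j) = fun i : Fin r => bidRow a b ξ i := by
  funext i
  have h1 : (M *ᵥ (fun j : Fin c => ξ j)) i = ∑ j ∈ Finset.range c,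
      ((if (i : ℕ) = j then a j * ξ j else 0) + if (i : ℕ) = j + 1 then b j * ξ j else 0) := by
    rw [← Fin.sum_univ_eq_sum_range (fun j => (if (i : ℕ) = j then a j * ξ j else 0) +
      if (i : ℕ) = j + 1 then b j * ξ j else 0) c]
    simp only [mulVec, dotProduct]
    refine Finset.sum_congr rfl fun j _ => ?_
    rw [hM i j]
    split_ifs <;> first | omega | ring
  rw [h1, Finset.sum_add_distrib, Finset.sum_ite_eq, bidRow]
  congr 1
  · split_ifs with h
    · rfl
    · rw [hξ _ (by simpa using h), mul_zero]
  · split_ifs with h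
    · rw [h]; simp
    · have : ∀ j, ((i : ℕ) = j + 1 ↔ (i : ℕ) - 1 = j) := by intro j; omega
      simp only [this]
      rw [Finset.sum_ite_eq]
      split_ifs with h
      · rfl
      · rw [hξ _ (by simpa using h), mul_zero]

lemma bid_tmulVec {r c : ℕ} {M : Matrix (Fin r) (Fin c) ℝ} {a b : ℕ → ℝ} (hM : IsBid M a b)
    (ξ : ℕ → ℝ) (hξ : ∀ j, r ≤ j → ξ j = 0) :
    Mᵀ *ᵥ (fun j : Fin r => ξ j) = fun j : Fin c => a j * ξ j + b j * ξ (j + 1) := by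
  funext j
  have h1 : (Mᵀ *ᵥ (fun j : Fin r => ξ j)) j = ∑ i ∈ Finset.range r,
      ((if (j : ℕ) = i then a j * ξ i else 0) + if (j : ℕ) + 1 = i then b j * ξ i else 0) := by
    rw [← Fin.sum_univ_eq_sum_range (fun i => (if (j : ℕ) = i then a j * ξ i else 0) +
      if (j : ℕ) + 1 = i then b j * ξ i else 0) r]
    simp only [mulVec, dotProduct]
    refine Finset.sum_congr rfl fun i _ => ?_
    rw [transpose_apply, hM i j]
    split_ifs <;> first | omega | ring
  rw [h1, Finset.sum_add_distrib, Finset.sum_ite_eq, Finset.sum_ite_eq]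
  congr 1
  · split_ifs with h
    · rfl
    · rw [hξ _ (by simpa using h), mul_zero]
  · split_ifs with h
    · rfl
    · rw [hξ _ (by simpa using h), mul_zero]

lemma bid_eig {r c : ℕ} {M : Matrix (Fin r) (Fin c) ℝ} {a b : ℕ → ℝ} (hM : IsBid M a b)
    (hrc : c ≤ r) (ha : ∀ i, i < c → a i ≠ 0) (hb : ∀ i, i + 1 < c → b i ≠ 0)
    (l : ℝ) (v : Fin c → ℝ) (hv : (Mᵀ * M) *ᵥ v = l • v)
    (hlast : ∀ i : Fin c, (i : ℕ) + 1 = c → v i = 0) : v = 0 := by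
  refine tridiag_zero _ l v ?_ ?_ hv hlast
  · intro i j hij
    rw [mul_apply]
    refine Finset.sum_eq_zero fun s _ => ?_
    rw [transpose_apply, hM, hM]
    split_ifs <;> first | omega | simp
  · intro i j hij
    have hi := i.2
    rw [mul_apply, Finset.sum_eq_single ⟨i, by omega⟩]
    · rw [transpose_apply, hM, hM]
      simp only [if_true]
      rw [if_neg (by omega), if_pos (by omega)]
      exact mul_ne_zero (ha _ hi) (hb _ (by omega))
    · intro s _ hs
      have : (s : ℕ) ≠ i := fun h => hs (Fin.ext h)
      rw [transpose_apply, hM, hM]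
      split_ifs <;> first | omega | simp
    · simp

lemma bid_teig {r c : ℕ} {M : Matrix (Fin r) (Fin c) ℝ} {a b : ℕ → ℝ} (hM : IsBid M a b)
    (hrc : r ≤ c) (ha : ∀ i, i < r → a i ≠ 0) (hb : ∀ i, i + 1 < r → b i ≠ 0)
    (l : ℝ) (v : Fin r → ℝ) (hv : (Mᵀᵀ * Mᵀ) *ᵥ v = l • v)
    (hlast : ∀ i : Fin r, (i : ℕ) + 1 = r → v i = 0) : v = 0 := by
  refine tridiag_zero _ l v ?_ ?_ hv hlast
  · intro i j hij
    rw [mul_apply]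
    refine Finset.sum_eq_zero fun s _ => ?_
    rw [transpose_transpose, transpose_apply, hM, hM]
    split_ifs <;> first | omega | simp
  · intro i j hij
    have hi := i.2
    rw [mul_apply, Finset.sum_eq_single ⟨j, by omega⟩]
    · rw [transpose_transpose, transpose_apply, hM, hM]
      simp only [if_true]
      rw [if_neg (by omega), if_pos (by omega)]
      exact mul_ne_zero (hb _ (by omega)) (ha _ (by omega))
    · intro s _ hs
      have : (s : ℕ) ≠ j := fun h => hs (Fin.ext h)
      rw [transpose_transpose, transpose_apply, hM, hM]
      split_ifs <;> first | omega | simp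
    · simp

lemma orth_dp {n : ℕ} {P : Matrix (Fin n) (Fin n) ℝ} (hP : Pᵀ * P = 1) (u : Fin n → ℝ) :
    (P *ᵥ u) ⬝ᵥ (P *ᵥ u) = u ⬝ᵥ u := by
  rw [dotProduct_mulVec, ← vecMul_transpose, vecMul_vecMul, hP, vecMul_one]


lemma part_mid {k : ℕ} {a b : ℕ → ℝ} (hk1 : 1 ≤ k)
    (ha : ∀ i, i < k → 0 < a i) (hb : ∀ i, i < k → 0 < b i)
    {M : Matrix (Fin k) (Fin k) ℝ} (hM : IsBid M a b)
    {N : Matrix (Fin (k + 1)) (Fin k) ℝ} (hN : IsBid N a b) :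
    singVal M k < singVal N k := by
  obtain ⟨x, hx, hmin⟩ := singVal_attained hk1 N
  have heig := min_eigen N _ (singVal_le N) x hmin
  have hlast : extZ x (k - 1) ≠ 0 := by
    intro h0
    refine hx (bid_eig hN (by omega) (fun i hi => (ha i hi).ne') (fun i hi => (hb i (by omega)).ne')
      _ x heig fun i hi => ?_)
    have : (i : ℕ) = k - 1 := by omega
    rw [← extZ_fin x, ← h0, ← this]
  have hp := dp_pos hx
  have h1 := singVal_le M x
  have e1 := bid_mulVec hM (extZ x) (extZ_ge x)
  have e2 := bid_mulVec hN (extZ x) (extZ_ge x)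
  rw [extZ_fin] at e1 e2
  rw [e1, dp_range] at h1
  rw [e2, dp_range, Finset.sum_range_succ] at hmin
  have h2 : 0 < bidRow a b (extZ x) k ^ 2 := by
    have : bidRow a b (extZ x) k = b (k - 1) * extZ x (k - 1) := by
      rw [bidRow, extZ_ge x k le_rfl, if_neg (by omega)]; ring
    rw [this]
    have := mul_ne_zero (hb (k - 1) (by omega)).ne' hlast
    positivity
  have h3 : singVal M k ^ 2 * (x ⬝ᵥ x) < singVal N k ^ 2 * (x ⬝ᵥ x) := by linarith
  exact lt_of_pow_lt_pow_left₀ 2 (singVal_nonneg _ _) (lt_of_mul_lt_mul_right h3 hp.le)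

lemma part_low {n k : ℕ} {a b : ℕ → ℝ} (hk1 : 1 ≤ k) (hkn : k + 1 ≤ n)
    (ha : ∀ i, i < n → 0 < a i) (hb : ∀ i, i + 1 < n → 0 < b i)
    {M : Matrix (Fin k) (Fin k) ℝ} (hM : IsBid M a b)
    {B : Matrix (Fin n) (Fin n) ℝ} (hB : IsBid B a b) (s : ℝ)
    (hsB : ∀ y, s ^ 2 * (y ⬝ᵥ y) ≤ (Bᵀ *ᵥ y) ⬝ᵥ (Bᵀ *ᵥ y)) :
    s < singVal M k := by
  by_contra! hcon
  rw [← singVal_transpose] at hcon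
  obtain ⟨x, hx, hmin⟩ := singVal_attained hk1 Mᵀ
  set t := singVal Mᵀ k with ht
  have ht0 : 0 ≤ t := singVal_nonneg _ _
  have h1 : ∀ y, t ^ 2 * (y ⬝ᵥ y) ≤ (Bᵀ *ᵥ y) ⬝ᵥ (Bᵀ *ᵥ y) := fun y =>
    (mul_le_mul_of_nonneg_right (pow_le_pow_left₀ ht0 hcon 2) (dp_nonneg y)).trans (hsB y)
  have e1 := bid_tmulVec hM (extZ x) (extZ_ge x)
  have e2 := bid_tmulVec hB (extZ x) (fun j hj => extZ_ge x j (by omega))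
  have ex := dp_range (c := k) (extZ x)
  rw [extZ_fin] at e1 ex
  have sub : Finset.range k ⊆ Finset.range n := by
    intro i; simp only [Finset.mem_range]; omega
  have hz : (fun j : Fin n => extZ x j) = 0 := by
    refine bid_teig hB le_rfl (fun i hi => (ha i hi).ne') (fun i hi => (hb i hi).ne') (t ^ 2) _
      (min_eigen Bᵀ _ h1 _ ?_) ?_
    · rw [e1, ex, dp_range (fun j => a j * extZ x j + b j * extZ x (j + 1))] at hmin
      rw [e2, dp_range (fun j => a j * extZ x j + b j * extZ x (j + 1)), dp_range,
        ← Finset.sum_subset sub, hmin, ← Finset.sum_subset sub]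
      · intro i _ hi
        rw [extZ_ge x i (by simpa using hi)]; ring
      · intro i _ hi
        have : k ≤ i := by simpa using hi
        rw [extZ_ge x i this, extZ_ge x (i + 1) (by omega)]; ring
    · intro i hi
      exact extZ_ge x _ (by omega)
  apply hx
  funext j
  have := congrFun hz ⟨j, by omega⟩
  simpa [extZ] using this

lemma part_high {n k : ℕ} {a b : ℕ → ℝ} (hk1 : 1 ≤ k) (hkn : k + 1 ≤ n)
    (ha : ∀ i, i < n → 0 < a i) (hb : ∀ i, i + 1 < n → 0 < b i)
    {N : Matrix (Fin (k + 1)) (Fin k) ℝ} (hN : IsBid N a b)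
    {B : Matrix (Fin n) (Fin n) ℝ} (hB : IsBid B a b)
    {P Q : Matrix (Fin n) (Fin n) ℝ} (hP : Pᵀ * P = 1) (hQ : Qᵀ * Q = 1) :
    singVal N k < singVal (P * B * Qᵀ) k := by
  set θ := singVal N k with hθ
  have hak := ha k (by omega)
  have hbk := hb (k - 1) (by omega)
  obtain ⟨ε, hε, hε2⟩ : ∃ ε : ℝ, 0 < ε ∧ θ ^ 2 * ε < 2 * (a k * b (k - 1)) := by
    refine ⟨a k * b (k - 1) / (θ ^ 2 + 1), by positivity, ?_⟩
    rw [mul_div_assoc', div_lt_iff₀ (by positivity)]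
    have : 0 < a k * b (k - 1) := by positivity
    nlinarith [sq_nonneg θ]
  let b' : ℕ → ℝ := fun j => if j + 1 = k then ε else 0
  let E : Matrix (Fin n) (Fin k) ℝ := of fun i j =>
    if (i : ℕ) = j then 1 else if (i : ℕ) = (j : ℕ) + 1 then b' j else 0
  have hE : IsBid E (fun _ => 1) b' := fun i j => rfl
  -- coordinates
  have hη : ∀ x : Fin k → ℝ, ∀ i, i < k → bidRow (fun _ => 1) b' (extZ x) i = extZ x i := by
    intro x i hi
    simp only [bidRow, b']
    split_ifs <;> first | omega | simp
  have hηk : ∀ x : Fin k → ℝ, bidRow (fun _ => 1) b' (extZ x) k = ε * extZ x (k - 1) := by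
    intro x
    simp only [bidRow, b']
    rw [extZ_ge x k le_rfl, if_neg (by omega), if_pos (by omega)]; ring
  have hηz : ∀ x : Fin k → ℝ, ∀ i, k + 1 ≤ i → bidRow (fun _ => 1) b' (extZ x) i = 0 := by
    intro x i hi
    simp only [bidRow, b']
    rw [extZ_ge x i (by omega), if_neg (by omega), if_neg (by omega)]; ring
  have hEx : ∀ x : Fin k → ℝ, E *ᵥ x = fun i : Fin n => bidRow (fun _ => 1) b' (extZ x) i := by
    intro x
    have := bid_mulVec hE (extZ x) (extZ_ge x)
    rwa [extZ_fin] at this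
  have sub : Finset.range (k + 1) ⊆ Finset.range n := by
    intro i; simp only [Finset.mem_range]; omega
  have hEE : ∀ x : Fin k → ℝ, (E *ᵥ x) ⬝ᵥ (E *ᵥ x) = x ⬝ᵥ x + (ε * extZ x (k - 1)) ^ 2 := by
    intro x
    rw [hEx, dp_range, ← Finset.sum_subset sub, Finset.sum_range_succ, hηk]
    · congr 1
      conv_rhs => rw [← extZ_fin x, dp_range]
      refine Finset.sum_congr rfl fun i hi => ?_
      rw [hη x i (by simpa using hi)]
    · intro i _ hi
      rw [hηz x i (by simpa using hi)]; ring
  have hBE : ∀ x : Fin k → ℝ, (N *ᵥ x) ⬝ᵥ (N *ᵥ x)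
      + (2 * (a k * b (k - 1)) * ε) * extZ x (k - 1) ^ 2
      ≤ (B *ᵥ (E *ᵥ x)) ⬝ᵥ (B *ᵥ (E *ᵥ x)) := by
    intro x
    have e2 := bid_mulVec hN (extZ x) (extZ_ge x)
    rw [extZ_fin] at e2
    rw [hEx, bid_mulVec hB _ (fun j hj => hηz x j (by omega)), dp_range, e2, dp_range]
    refine le_trans ?_ (Finset.sum_le_sum_of_subset_of_nonneg sub fun i _ _ => sq_nonneg _)
    rw [Finset.sum_range_succ, Finset.sum_range_succ]
    have e3 : ∑ i ∈ Finset.range k, bidRow a b (extZ x) i ^ 2 =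
        ∑ i ∈ Finset.range k, bidRow a b (bidRow (fun _ => 1) b' (extZ x)) i ^ 2 := by
      refine Finset.sum_congr rfl fun i hi => ?_
      have hi : i < k := by simpa using hi
      rw [bidRow, bidRow, hη x i hi, hη x (i - 1) (by omega)]
    rw [e3, add_assoc]
    gcongr
    rw [bidRow, bidRow, hηk, hη x (k - 1) (by omega), if_neg (by omega),
      extZ_ge x k le_rfl]
    nlinarith [sq_nonneg (a k * ε * extZ x (k - 1))]
  have hQE : ∀ x, (Q * E) *ᵥ x = Q *ᵥ (E *ᵥ x) := fun x => (mulVec_mulVec _ _ _).symm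
  have hA : ∀ u, (P * B * Qᵀ) *ᵥ (Q *ᵥ u) = P *ᵥ (B *ᵥ u) := by
    intro u
    rw [mulVec_mulVec, Matrix.mul_assoc, hQ, Matrix.mul_one, mulVec_mulVec]
  refine lt_singVal hk1 _ (Q * E) ?_ θ ?_
  · intro x hx h0
    have h1 := orth_dp hQ (E *ᵥ x)
    rw [← hQE, h0, hEE, zero_dotProduct] at h1
    have := dp_pos hx
    nlinarith [sq_nonneg (ε * extZ x (k - 1))]
  · intro x hx
    rw [hQE, hA, orth_dp hP, orth_dp hQ, hEE]
    refine lt_of_lt_of_le ?_ (hBE x)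
    have h1 := singVal_le N x
    by_cases h0 : extZ x (k - 1) = 0
    · rw [h0]
      have : θ ^ 2 * (x ⬝ᵥ x) ≠ (N *ᵥ x) ⬝ᵥ (N *ᵥ x) := by
        intro he
        refine hx (bid_eig hN (by omega) (fun i hi => (ha i (by omega)).ne')
          (fun i hi => (hb i (by omega)).ne')
          _ x (min_eigen N _ (singVal_le N) x he.symm) fun i hi => ?_)
        have : (i : ℕ) = k - 1 := by omega
        rw [← extZ_fin x, ← h0, ← this]
      have := lt_of_le_of_ne h1 this
      simpa using this
    · have h2 : 0 < ε * extZ x (k - 1) ^ 2 := by positivity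
      have h3 := mul_lt_mul_of_pos_right hε2 h2
      rw [← hθ] at h1
      nlinarith


/-- square case `m = n`. If `A = P B̄ Qᵀ` with `P, Q` orthogonal and `B̄` lower
bidiagonal with positive diagonal and subdiagonal, then for `1 ≤ k ≤ n-1` the smallest singular
values satisfy `σ_n < θ̄_k^{(k)} < θ_k^{(k)} < σ_k`. -/
theorem smallest_singularValues_Bbark_Bk_bounds_square
    (n : ℕ) (hn : 2 ≤ n)
    (A : Matrix (Fin n) (Fin n) ℝ) (hAns : A.det ≠ 0)
    (P : Matrix (Fin n) (Fin n) ℝ) (hP : Pᵀ * P = 1)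
    (Q : Matrix (Fin n) (Fin n) ℝ) (hQ : Qᵀ * Q = 1)
    (α : Fin n → ℝ) (hα : ∀ i, 0 < α i)
    (β : Fin n → ℝ) (hβ : ∀ i : Fin n, (i : ℕ) + 1 < n → 0 < β i)
    (Bbar : Matrix (Fin n) (Fin n) ℝ)
    (hBbar : ∀ i j : Fin n,
      Bbar i j = if (i : ℕ) = (j : ℕ) then α j
        else if (i : ℕ) = (j : ℕ) + 1 then β j else 0)
    (hA : A = P * Bbar * Qᵀ)
    (σ : Fin n → ℝ) (hσpos : ∀ i, 0 < σ i)
    (hσstrict : ∀ i j : Fin n, i < j → σ j < σ i)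
    (hσ : ∀ i : Fin n, σ i = singVal A ((i : ℕ) + 1))
    (k : ℕ) (hk1 : 1 ≤ k) (hk2 : k ≤ n - 1) :
    σ ⟨n - 1, by omega⟩ < singVal (subUL Bbar k k (by omega) (by omega)) k ∧
    singVal (subUL Bbar k k (by omega) (by omega)) k <
      singVal (subUL Bbar (k + 1) k (by omega) (by omega)) k ∧
    singVal (subUL Bbar (k + 1) k (by omega) (by omega)) k < σ ⟨k - 1, by omega⟩ := by
  have hkn : k + 1 ≤ n := by omega
  have ha : ∀ i, i < n → 0 < extZ α i := by
    intro i hi; simp only [extZ, hi, dif_pos]; exact hα _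
  have hb : ∀ i, i + 1 < n → 0 < extZ β i := by
    intro i hi
    have h : i < n := by omega
    simp only [extZ, h, dif_pos]; exact hβ _ hi
  have hB : IsBid Bbar (extZ α) (extZ β) := by
    intro i j; rw [hBbar]; simp [extZ]
  have hM : ∀ (r c : ℕ) (hr : r ≤ n) (hc : c ≤ n),
      IsBid (subUL Bbar r c hr hc) (extZ α) (extZ β) := by
    intro r c hr hc i j
    have := hB ⟨i, by omega⟩ ⟨j, by omega⟩
    exact this
  refine ⟨?_, ?_, ?_⟩
  · refine part_low hk1 hkn ha hb (hM _ _ _ _) hB _ fun y => ?_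
    have e : n - 1 + 1 = n := by omega
    rw [hσ]
    simp only [e]
    rw [← singVal_transpose]
    have h := singVal_le Aᵀ (P *ᵥ y)
    have h2 : Aᵀ *ᵥ (P *ᵥ y) = Q *ᵥ (Bbarᵀ *ᵥ y) := by
      rw [hA, transpose_mul, transpose_mul, transpose_transpose, mulVec_mulVec, Matrix.mul_assoc,
        Matrix.mul_assoc, hP, Matrix.mul_one, mulVec_mulVec]
    rwa [h2, orth_dp hP, orth_dp hQ] at h
  · exact part_mid hk1 (fun i hi => ha i (by omega)) (fun i hi => hb i (by omega))
      (hM _ _ _ _) (hM _ _ _ _)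
  · have e : k - 1 + 1 = k := by omega
    rw [hσ]
    simp only [e]
    rw [hA]
    exact part_high hk1 hkn ha hb (hM _ _ _ _) hB hP hQ
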